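/- Let p be a prime and G a p-group of order p^n with n ≥ 5, |G'| = p^2, and G' not contained in Z(G). Then the Schur multiplier of G does not have order p^{(n-1)(n-2)/2 - 1} (i.e. G does not satisfy s(G) = 2). -/

import Mathlib

/-- The kernel of the canonical free presentation `FreeGroup G → G`. -/
def presentationKernel (G : Type u) [Group G] : Subgroup (FreeGroup G) :=
  (FreeGroup.lift (id : G → G)).ker

/-- The Schur multiplier `M(G) = H₂(G, ℤ)` (second integral group homology) of a
group `G`, realised via Hopf's integral formula `H₂(G, ℤ) ≅ (R ⊓ [F, F]) / [F, R]`,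
where `F = FreeGroup G` is the canonical free group surjecting onto `G` with
kernel `R`. -/
def SchurMultiplier (G : Type u) [Group G] : Type u :=
  ↥(presentationKernel G ⊓ commutator (FreeGroup G)) ⧸
    (⁅(⊤ : Subgroup (FreeGroup G)), presentationKernel G⁆.subgroupOf
      (presentationKernel G ⊓ commutator (FreeGroup G)))

/-- A finite `p`-group `H` is extraspecial if its center, derived subgroup and
Frattini subgroup coincide and have order `p`. -/
def IsExtraspecial (p : ℕ) (H : Type*) [Group H] : Prop :=
  Subgroup.center H = commutator H ∧ Subgroup.center H = frattini H ∧
    Nat.card (Subgroup.center H) = p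

/-!
Write `M(G) = (R ∩ F') / [F, R]` with `F` free, so that `|M(G)| * |G'| = [F' : [F, R]]`. If
`N ≤ K = N⟨g⟩` are normal in `F` and `[F, K] ≤ N`, then `[F, K] / [F, N]` is the image of the
homomorphism `x ↦ [x, g]`, so its order is the index of the centralizer of `g` modulo `[F, N]`.
Climbing from `R` to `F` through factors of order `p` bounds `[F' : [F, R]]`, and the trivial bounds
on these indices give Wiegold's estimate. When `G'` has order `p ^ 2` and is not central, the first
two generators can be taken to be `[[y₁, y₂], x]` and `[y₁, y₂]`; as an element centralizing the
entries of a commutator centralizes the commutator, the first two indices divide `p` and `p ^ 2`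
only, so that `|M(G)|` divides `p ^ ((n - 2).choose 2 + 1)`, which is too small as soon as `n ≥ 5`.
-/

open scoped commutatorElement

section Commutator

theorem commute_commutatorElement_of_commutatorElement_mem_center {G : Type*} [Group G] {e c x : G}
    (hc : ⁅e, c⁆ ∈ Subgroup.center G) (hxc : Commute ⁅e, x⁆ c) (hx : Commute ⁅e, x⁆ ⁅c, x⁆) :
    Commute e ⁅c, x⁆ := by
  have hcomm : ∀ g : G, ⁅⁅e, c⁆, g⁆ = 1 := fun g =>
    commutatorElement_eq_one_iff_mul_comm.2 (Subgroup.mem_center_iff.1 hc g).symm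
  have hconj : ∀ g : G, e * g * e⁻¹ = ⁅e, g⁆ * g := fun g => by
    rw [commutatorElement_def, inv_mul_cancel_right]
  refine mul_inv_eq_iff_eq_mul.1 ?_
  calc
    e * ⁅c, x⁆ * e⁻¹ = ⁅⁅e, c⁆ * c, ⁅e, x⁆ * x⁆ := by
      rw [conjugate_commutatorElement, hconj, hconj]
    _ = ⁅c, ⁅e, x⁆ * x⁆ := by
      rw [commutatorElement_mul_left_eq_conj_mul, hcomm, mul_one,
        ← Subgroup.mem_center_iff.1 hc, mul_inv_cancel_right]
    _ = ⁅e, x⁆ * ⁅c, x⁆ * ⁅e, x⁆⁻¹ := by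
      rw [commutatorElement_mul_right_eq_mul_conj, hxc.symm.commutator_eq, one_mul]
    _ = ⁅c, x⁆ := by rw [hx.eq, mul_inv_cancel_right]

variable {F : Type*} [Group F]

theorem commute_mk_iff_commutatorElement_mem {N : Subgroup F} [N.Normal] {x y : F} :
    Commute (x : F ⧸ N) y ↔ ⁅x, y⁆ ∈ N := by
  rw [← commutatorElement_eq_one_iff_commute, ← QuotientGroup.eq_one_iff]
  rfl

theorem commutator_commutator_le_of_rotate {N A B C : Subgroup F} [N.Normal]
    (hBCA : ⁅⁅B, C⁆, A⁆ ≤ N) (hCAB : ⁅⁅C, A⁆, B⁆ ≤ N) : ⁅⁅A, B⁆, C⁆ ≤ N := by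
  rw [← QuotientGroup.ker_mk' N, ← Subgroup.map_eq_bot_iff] at *
  simp only [Subgroup.map_commutator] at *
  exact Subgroup.commutator_commutator_eq_bot_of_rotate hBCA hCAB

theorem commutatorElement_mem_commutator (x y : F) : ⁅x, y⁆ ∈ commutator F :=
  Subgroup.commutator_mem_commutator (Subgroup.mem_top x) (Subgroup.mem_top y)

theorem le_upperCentralSeriesStep_iff {N M : Subgroup F} [N.Normal] :
    M ≤ Subgroup.upperCentralSeriesStep N ↔ ⁅(⊤ : Subgroup F), M⁆ ≤ N := by
  rw [Subgroup.commutator_comm, Subgroup.commutator_le]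
  exact ⟨fun h m hm x _ => h hm x, fun h m hm x => h m hm x trivial⟩

end Commutator

section Centralizer

variable {F : Type*} [Group F]

/-- The centralizer of `y` modulo the normal subgroup `N`, encoded as the preimage in `F` of the
centralizer of the image of `y` in `F ⧸ N`. -/
def centralizerMod (N : Subgroup F) [N.Normal] (y : F) : Subgroup F :=
  (Subgroup.centralizer {(y : F ⧸ N)}).comap (QuotientGroup.mk' N)

theorem mem_centralizerMod {N : Subgroup F} [N.Normal] {x y : F} :
    x ∈ centralizerMod N y ↔ ⁅x, y⁆ ∈ N := by
  rw [centralizerMod, Subgroup.mem_comap, Subgroup.mem_centralizer_singleton_iff]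
  exact commute_mk_iff_commutatorElement_mem (x := x) (y := y)

theorem mem_centralizerMod_comm {N : Subgroup F} [N.Normal] {x y : F} :
    x ∈ centralizerMod N y ↔ y ∈ centralizerMod N x := by
  rw [mem_centralizerMod, mem_centralizerMod, ← commutatorElement_inv, N.inv_mem_iff]

theorem sup_zpowers_le_centralizerMod {N K : Subgroup F} [N.Normal] {y c : F}
    (hK : ∀ k ∈ K, ⁅k, y⁆ ∈ N) (hc : ⁅c, y⁆ ∈ N) :
    K ⊔ Subgroup.zpowers c ≤ centralizerMod N y :=
  sup_le (fun k hk => mem_centralizerMod.2 (hK k hk))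
    (Subgroup.zpowers_le.2 (mem_centralizerMod.2 hc))

theorem commutator_self_le_of_le_sup_zpowers {N K A : Subgroup F} [N.Normal] {c : F} (hc : c ∈ A)
    (hA : A ≤ K ⊔ Subgroup.zpowers c) (hKA : ⁅K, A⁆ ≤ N) : ⁅A, A⁆ ≤ N := by
  have hcomm : ∀ k ∈ K, ∀ a ∈ A, ⁅k, a⁆ ∈ N := Subgroup.commutator_le.1 hKA
  have hAc : A ≤ centralizerMod N c := hA.trans
    (sup_zpowers_le_centralizerMod (fun k hk => hcomm k hk c hc)
      (by rw [commutatorElement_self]; exact N.one_mem))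
  refine Subgroup.commutator_le.2 fun a ha b hb => mem_centralizerMod.1 ?_
  exact hA.trans (sup_zpowers_le_centralizerMod (fun k hk => hcomm k hk b hb)
    (mem_centralizerMod.1 (mem_centralizerMod_comm.1 (hAc hb)))) ha

theorem mem_centralizerMod_commutatorElement {N : Subgroup F} [N.Normal] {e c x : F}
    (hc : ⁅e, c⁆ ∈ Subgroup.upperCentralSeriesStep N) (hxc : ⁅⁅e, x⁆, c⁆ ∈ N)
    (hx : ⁅⁅e, x⁆, ⁅c, x⁆⁆ ∈ N) : e ∈ centralizerMod N ⁅c, x⁆ := by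
  rw [Subgroup.upperCentralSeriesStep_eq_comap_center] at hc
  exact mem_centralizerMod.2 (commute_mk_iff_commutatorElement_mem.1
    (commute_commutatorElement_of_commutatorElement_mem_center (e := (e : F ⧸ N)) (c := c) (x := x)
      hc (commute_mk_iff_commutatorElement_mem.2 hxc) (commute_mk_iff_commutatorElement_mem.2 hx)))

/-- The homomorphism `x ↦ ⁅x, y⁆` into `F ⧸ N`, for an element `y` all of whose commutators
`⁅x, y⁆` are central modulo `N`; its kernel is the centralizer of `y` modulo `N`. -/
def commutatorModHom (N : Subgroup F) [N.Normal] (y : F)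
    (hy : ∀ x : F, ⁅x, y⁆ ∈ Subgroup.upperCentralSeriesStep N) : F →* F ⧸ N where
  toFun x := (⁅x, y⁆ : F)
  map_one' := by rw [commutatorElement_one_left, QuotientGroup.mk_one]
  map_mul' a b := by
    have hb : ∀ z, Commute ((⁅b, y⁆ : F) : F ⧸ N) z := fun z => by
      obtain ⟨z, rfl⟩ := QuotientGroup.mk_surjective z
      exact commute_mk_iff_commutatorElement_mem.2 (hy b z)
    rw [commutatorElement_mul_left_eq_conj_mul]
    simp only [QuotientGroup.mk_mul, QuotientGroup.mk_inv]
    rw [← (hb a).eq, mul_inv_cancel_right, (hb _).eq]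

variable {N : Subgroup F} [N.Normal] {y : F}

theorem ker_commutatorModHom (hy : ∀ x : F, ⁅x, y⁆ ∈ Subgroup.upperCentralSeriesStep N) :
    (commutatorModHom N y hy).ker = centralizerMod N y :=
  Subgroup.ext fun _ => (QuotientGroup.eq_one_iff _).trans mem_centralizerMod.symm

theorem normal_centralizerMod (hy : ∀ x : F, ⁅x, y⁆ ∈ Subgroup.upperCentralSeriesStep N) :
    (centralizerMod N y).Normal :=
  ker_commutatorModHom hy ▸ inferInstance

theorem index_centralizerMod (hy : ∀ x : F, ⁅x, y⁆ ∈ Subgroup.upperCentralSeriesStep N) :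
    (centralizerMod N y).index = Nat.card (commutatorModHom N y hy).range := by
  rw [← ker_commutatorModHom hy, Subgroup.index_ker]

theorem relIndex_eq_card_map_mk (N H : Subgroup F) [N.Normal] :
    N.relIndex H = Nat.card (H.map (QuotientGroup.mk' N)) := by
  rw [← Subgroup.relIndex_ker, QuotientGroup.ker_mk']

theorem index_centralizerMod_dvd_relIndex {M : Subgroup F} (hM : ⁅(⊤ : Subgroup F), M⁆ ≤ N)
    (hy : ∀ x : F, ⁅x, y⁆ ∈ M) : (centralizerMod N y).index ∣ N.relIndex M := by
  rw [index_centralizerMod fun x => le_upperCentralSeriesStep_iff.2 hM (hy x),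
    relIndex_eq_card_map_mk]
  refine Subgroup.card_dvd_of_le ?_
  rintro _ ⟨x, rfl⟩
  exact Subgroup.mem_map_of_mem _ (hy x)

theorem relIndex_commutator_dvd_index_centralizerMod {K : Subgroup F} {g : F}
    (hK : ⁅(⊤ : Subgroup F), K⁆ ≤ N) (hgK : g ∈ K) (hKg : K ≤ N ⊔ Subgroup.zpowers g) :
    ⁅(⊤ : Subgroup F), N⁆.relIndex ⁅(⊤ : Subgroup F), K⁆ ∣
      (centralizerMod ⁅(⊤ : Subgroup F), N⁆ g).index := by
  have hNcentral : N ≤ Subgroup.upperCentralSeriesStep ⁅(⊤ : Subgroup F), N⁆ :=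
    le_upperCentralSeriesStep_iff.2 le_rfl
  have hg : ∀ x, ⁅x, g⁆ ∈ N := fun x =>
    hK (Subgroup.commutator_mem_commutator (Subgroup.mem_top x) hgK)
  rw [index_centralizerMod fun x => hNcentral (hg x), relIndex_eq_card_map_mk]
  refine Subgroup.card_dvd_of_le (Subgroup.map_le_iff_le_comap.2 ?_)
  set φ := commutatorModHom ⁅(⊤ : Subgroup F), N⁆ g fun x => hNcentral (hg x)
  set M := φ.range.comap (QuotientGroup.mk' ⁅(⊤ : Subgroup F), N⁆)
  have hgM : ∀ x, ⁅x, g⁆ ∈ M := fun x => ⟨x, rfl⟩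
  have hNM : ⁅(⊤ : Subgroup F), N⁆ ≤ M := fun x hx =>
    ⟨1, (map_one φ).trans ((QuotientGroup.eq_one_iff x).2 hx).symm⟩
  have hMN : M ≤ N := by
    rintro z ⟨x, hx⟩
    have hxz : ⁅x, g⁆⁻¹ * z ∈ N := Subgroup.commutator_le_right _ _ (QuotientGroup.eq.1 hx)
    exact (Subgroup.mul_mem_cancel_left _ (N.inv_mem (hg x))).1 hxz
  have : M.Normal := Subgroup.commutator_top_left_le_iff.1
    ((Subgroup.commutator_mono le_rfl hMN).trans hNM)
  have hKM : K ≤ Subgroup.upperCentralSeriesStep M := hKg.trans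
    (sup_le (le_upperCentralSeriesStep_iff.2 hNM) (Subgroup.zpowers_le.2 fun x => by
      rw [← commutatorElement_inv]
      exact M.inv_mem (hgM x)))
  exact le_upperCentralSeriesStep_iff.1 hKM

end Centralizer

section PrimePower

variable {p n : ℕ} [Fact p.Prime] {F : Type*} [Group F]

theorem le_sup_zpowers_of_relIndex_eq_prime {N K : Subgroup F} (hp : N.relIndex K = p)
    (hNK : N ≤ K) {g : F} (hgK : g ∈ K) (hgN : g ∉ N) : K ≤ N ⊔ Subgroup.zpowers g := by
  have hle : N ⊔ Subgroup.zpowers g ≤ K := sup_le hNK (Subgroup.zpowers_le.2 hgK)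
  have hmul := Subgroup.relIndex_mul_relIndex N _ K le_sup_left hle
  rw [hp] at hmul
  rcases (Nat.dvd_prime Fact.out).1 (Dvd.intro _ hmul) with hone | hprime
  · exact absurd (Subgroup.relIndex_eq_one.1 hone
      (Subgroup.mem_sup_right (Subgroup.mem_zpowers g))) hgN
  · rw [hprime] at hmul
    exact Subgroup.relIndex_eq_one.1 (Nat.eq_of_mul_eq_mul_left (Fact.out : p.Prime).pos
      (hmul.trans (mul_one p).symm))

theorem inf_center_ne_bot_of_isPGroup {G : Type*} [Group G] [Finite G] (hG : IsPGroup p G)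
    {N : Subgroup G} [N.Normal] (hN : N ≠ ⊥) : N ⊓ Subgroup.center G ≠ ⊥ := by
  have hdvd : p ∣ Nat.card N :=
    (hG.to_subgroup N).card_eq_or_dvd.resolve_left fun h => hN (Subgroup.card_eq_one.1 h)
  have hone : (1 : N) ∈ MulAction.fixedPoints (ConjAct G) N := fun g => smul_one g
  obtain ⟨z, hz, hz1⟩ := (hG.of_equiv ConjAct.toConjAct
    ).exists_fixed_point_of_prime_dvd_card_of_fixed_point N hdvd hone
  have hzcenter : (z : G) ∈ Subgroup.center G := Subgroup.mem_center_iff.2 fun g =>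
    mul_inv_eq_iff_eq_mul.1 (congrArg Subtype.val (hz (ConjAct.toConjAct g)))
  exact (Subgroup.ne_bot_iff_exists_ne_one).2
    ⟨⟨z, z.2, hzcenter⟩, fun h => hz1 (Subtype.ext (congrArg Subtype.val h).symm)⟩

theorem exists_le_center_card_eq_prime {G : Type*} [Group G] [Finite G] (hG : IsPGroup p G)
    {N : Subgroup G} [N.Normal] (hN : N ≠ ⊥) :
    ∃ Z ≤ N, Z ≤ Subgroup.center G ∧ Nat.card Z = p := by
  have hdvd : p ∣ Nat.card (N ⊓ Subgroup.center G : Subgroup G) :=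
    (hG.to_subgroup _).card_eq_or_dvd.resolve_left fun h =>
      inf_center_ne_bot_of_isPGroup hG hN (Subgroup.card_eq_one.1 h)
  obtain ⟨z, hz⟩ := exists_prime_orderOf_dvd_card' p hdvd
  exact ⟨Subgroup.zpowers (z : G), Subgroup.zpowers_le.2 z.2.1, Subgroup.zpowers_le.2 z.2.2,
    (Nat.card_zpowers _).trans ((Subgroup.orderOf_coe z).trans hz)⟩

theorem exists_central_relIndex_eq_prime {N H : Subgroup F} [N.Normal] [H.Normal]
    (hN : N.index = p ^ n) (hNH : N < H) :
    ∃ K, N ≤ K ∧ K ≤ H ∧ ⁅(⊤ : Subgroup F), K⁆ ≤ N ∧ N.relIndex K = p := by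
  have : Finite (F ⧸ N) := Nat.finite_of_card_ne_zero
    (hN.trans_ne (pow_ne_zero n (Fact.out : p.Prime).ne_zero))
  have : (H.map (QuotientGroup.mk' N)).Normal :=
    Subgroup.Normal.map inferInstance _ (QuotientGroup.mk'_surjective N)
  have hne : H.map (QuotientGroup.mk' N) ≠ ⊥ := fun h =>
    hNH.not_ge ((Subgroup.map_eq_bot_iff _).1 h |>.trans_eq (QuotientGroup.ker_mk' N))
  obtain ⟨Z, hZH, hZcenter, hZ⟩ := exists_le_center_card_eq_prime (IsPGroup.of_card hN) hne
  refine ⟨Z.comap (QuotientGroup.mk' N), ?_, ?_, ?_, ?_⟩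
  · exact (QuotientGroup.ker_mk' N).ge.trans (Subgroup.ker_le_comap _ _)
  · refine (Subgroup.comap_mono hZH).trans_eq ?_
    rw [Subgroup.comap_map_eq, QuotientGroup.ker_mk', sup_eq_left.2 hNH.le]
  · rw [← le_upperCentralSeriesStep_iff, Subgroup.upperCentralSeriesStep_eq_comap_center]
    exact Subgroup.comap_mono hZcenter
  · rw [relIndex_eq_card_map_mk,
      Subgroup.map_comap_eq_self_of_surjective (QuotientGroup.mk'_surjective N), hZ]

theorem commutator_le_of_relIndex_eq_prime {N H : Subgroup F} [N.Normal] [H.Normal]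
    (hN : N.index = p ^ n) (hNH : N ≤ H) (hp : N.relIndex H = p) :
    ⁅(⊤ : Subgroup F), H⁆ ≤ N := by
  have hprime : p.Prime := Fact.out
  have hlt : N < H := lt_of_le_not_ge hNH fun h =>
    hprime.ne_one (hp.symm.trans (Subgroup.relIndex_eq_one.2 h))
  obtain ⟨K, hNK, hKH, hK, hKp⟩ := exists_central_relIndex_eq_prime hN hlt
  have hmul := Subgroup.relIndex_mul_relIndex N K H hNK hKH
  rw [hp, hKp] at hmul
  have hHK : H ≤ K := Subgroup.relIndex_eq_one.1 (Nat.eq_of_mul_eq_mul_left hprime.pos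
    (hmul.trans (mul_one p).symm))
  exact (Subgroup.commutator_mono le_rfl hHK).trans hK

theorem relIndex_commutator_dvd_index_mul {N K : Subgroup F} [N.Normal]
    (hNK : N ≤ K) (hK : ⁅(⊤ : Subgroup F), K⁆ ≤ N) (hp : N.relIndex K = p) {g : F} (hgK : g ∈ K)
    (hgN : g ∉ N) :
    ⁅(⊤ : Subgroup F), N⁆.relIndex (commutator F) ∣
      (centralizerMod ⁅(⊤ : Subgroup F), N⁆ g).index *
        ⁅(⊤ : Subgroup F), K⁆.relIndex (commutator F) := by
  rw [← Subgroup.relIndex_mul_relIndex _ ⁅(⊤ : Subgroup F), K⁆ (commutator F)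
    (Subgroup.commutator_mono le_rfl hNK) (Subgroup.commutator_mono le_rfl le_top)]
  exact mul_dvd_mul_right (relIndex_commutator_dvd_index_centralizerMod hK hgK
    (le_sup_zpowers_of_relIndex_eq_prime hp hNK hgK hgN)) _

theorem relIndex_commutator_dvd_pow_choose_two {N : Subgroup F} [N.Normal]
    (hN : N.index = p ^ n) :
    ⁅(⊤ : Subgroup F), N⁆.relIndex (commutator F) ∣ p ^ n.choose 2 := by
  induction n generalizing N with
  | zero =>
    obtain rfl : N = ⊤ := Subgroup.index_eq_one.1 (hN.trans (pow_zero p))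
    exact (Subgroup.relIndex_self _).dvd.trans (one_dvd _)
  | succ m ih =>
    have hprime : p.Prime := Fact.out
    have hlt : N < ⊤ := lt_top_iff_ne_top.2 fun h => (Nat.one_lt_pow m.succ_ne_zero
      hprime.one_lt).ne ((Subgroup.index_eq_one.2 h).symm.trans hN)
    obtain ⟨K, hNK, -, hK, hKp⟩ := exists_central_relIndex_eq_prime hN hlt
    have : K.Normal := Subgroup.commutator_top_left_le_iff.1 (hK.trans hNK)
    have hKindex : K.index = p ^ m := Nat.eq_of_mul_eq_mul_left hprime.pos <| by
      rw [← pow_succ', ← hN, ← hKp, Subgroup.relIndex_mul_index hNK]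
    obtain ⟨g, hgK, hgN⟩ : ∃ g ∈ K, g ∉ N := SetLike.not_le_iff_exists.1 fun h =>
      hprime.ne_one (hKp.symm.trans (Subgroup.relIndex_eq_one.2 h))
    have hcent : K ≤ centralizerMod ⁅(⊤ : Subgroup F), N⁆ g :=
      (le_sup_zpowers_of_relIndex_eq_prime hKp hNK hgK hgN).trans
        (sup_zpowers_le_centralizerMod
          (fun k hk => le_upperCentralSeriesStep_iff.2 le_rfl hk g)
          (by rw [commutatorElement_self]; exact one_mem _))
    have hindex : (centralizerMod ⁅(⊤ : Subgroup F), N⁆ g).index ∣ p ^ m :=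
      hKindex ▸ Subgroup.index_dvd_of_le hcent
    rw [Nat.choose_succ_succ', Nat.choose_one_right, pow_add]
    exact (relIndex_commutator_dvd_index_mul hNK hK hKp hgK hgN).trans
      (mul_dvd_mul hindex (ih hKindex))

end PrimePower

section NoncentralCommutator

variable {F : Type*} [Group F]

theorem commutator_commutator_le_commutator_top {R K : Subgroup F} [R.Normal] {c : F}
    (hK : ⁅(⊤ : Subgroup F), K⁆ ≤ R) (hc : c ∈ commutator F)
    (hF : commutator F ≤ K ⊔ Subgroup.zpowers c) :
    ⁅commutator F, commutator F⁆ ≤ ⁅(⊤ : Subgroup F), R⁆ := by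
  have hKR : ⁅⁅(⊤ : Subgroup F), K⁆, ⊤⁆ ≤ ⁅(⊤ : Subgroup F), R⁆ :=
    (Subgroup.commutator_mono hK le_rfl).trans (Subgroup.commutator_comm_le _ _)
  refine commutator_self_le_of_le_sup_zpowers hc hF ?_
  rw [Subgroup.commutator_comm]
  refine commutator_commutator_le_of_rotate hKR ?_
  rwa [Subgroup.commutator_comm K]

theorem index_centralizerMod_commutatorElement_dvd_relIndex {R K : Subgroup F} [R.Normal] {c : F}
    (hK : ⁅(⊤ : Subgroup F), K⁆ ≤ R) (hcK : ∀ x : F, ⁅x, c⁆ ∈ K) (hc : c ∈ commutator F)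
    (hF : ⁅commutator F, commutator F⁆ ≤ ⁅(⊤ : Subgroup F), R⁆) (x : F) :
    (centralizerMod ⁅(⊤ : Subgroup F), R⁆ ⁅c, x⁆).index ∣ R.relIndex K := by
  refine (Subgroup.index_dvd_of_le fun e he => ?_).trans (index_centralizerMod_dvd_relIndex hK hcK)
  have hcomm := Subgroup.commutator_le.1 hF _ (commutatorElement_mem_commutator e x)
  exact mem_centralizerMod_commutatorElement
    (le_upperCentralSeriesStep_iff.2 le_rfl (mem_centralizerMod.1 he))
    (hcomm c hc) (hcomm _ (commutatorElement_mem_commutator c x))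

theorem index_inf_dvd_mul {A B : Subgroup F} [A.Normal] : (A ⊓ B).index ∣ A.index * B.index := by
  rw [← Subgroup.relIndex_mul_index inf_le_right, Subgroup.inf_relIndex_right]
  exact mul_dvd_mul_right (Subgroup.relIndex_dvd_index_of_normal A B) _

theorem index_centralizerMod_commutatorElement_dvd_relIndex_sq {K H : Subgroup F} [K.Normal]
    (hH : ⁅(⊤ : Subgroup F), H⁆ ≤ K) (hF : commutator F ≤ H) (y₁ y₂ : F) :
    (centralizerMod ⁅(⊤ : Subgroup F), K⁆ ⁅y₁, y₂⁆).index ∣ K.relIndex H ^ 2 := by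
  have hmem : ∀ x y : F, ⁅x, y⁆ ∈ H := fun x y => hF (commutatorElement_mem_commutator x y)
  have hindex : ∀ y : F, (centralizerMod K y).index ∣ K.relIndex H := fun y =>
    index_centralizerMod_dvd_relIndex hH fun x => hmem x y
  have hcentral : K ≤ Subgroup.upperCentralSeriesStep ⁅(⊤ : Subgroup F), K⁆ :=
    le_upperCentralSeriesStep_iff.2 le_rfl
  have hle : centralizerMod K y₁ ⊓ centralizerMod K y₂ ≤
      centralizerMod ⁅(⊤ : Subgroup F), K⁆ ⁅y₁, y₂⁆ := fun e he =>
    have h₂ := hcentral (mem_centralizerMod.1 he.2)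
    mem_centralizerMod_commutatorElement (hcentral (mem_centralizerMod.1 he.1)) (h₂ _) (h₂ _)
  have : (centralizerMod K y₁).Normal :=
    normal_centralizerMod fun x => le_upperCentralSeriesStep_iff.2 hH (hmem x y₁)
  rw [sq]
  exact (Subgroup.index_dvd_of_le hle).trans
    (index_inf_dvd_mul.trans (mul_dvd_mul (hindex y₁) (hindex y₂)))

theorem exists_commutatorElement_notMem {R : Subgroup F} [R.Normal]
    (hR : ¬ ⁅(⊤ : Subgroup F), commutator F⁆ ≤ R) : ∃ y₁ y₂ x : F, ⁅⁅y₁, y₂⁆, x⁆ ∉ R := by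
  contrapose! hR
  exact le_upperCentralSeriesStep_iff.1
    (Subgroup.commutator_le.2 fun y₁ _ y₂ _ x => hR y₁ y₂ x)

theorem relIndex_commutator_dvd_of_not_commutator_commutator_le {p m : ℕ} [Fact p.Prime]
    {R H : Subgroup F} [R.Normal] [H.Normal] (hRH : R ≤ H) (hRp : R.relIndex H = p ^ 2)
    (hHindex : H.index = p ^ m) (hF : commutator F ≤ H)
    (hR : ¬ ⁅(⊤ : Subgroup F), commutator F⁆ ≤ R) :
    ⁅(⊤ : Subgroup F), R⁆.relIndex (commutator F) ∣ p ^ (m.choose 2 + 3) := by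
  have hprime : p.Prime := Fact.out
  have hRindex : R.index = p ^ (2 + m) := by
    rw [← Subgroup.relIndex_mul_index hRH, hRp, hHindex, pow_add]
  have hlt : R < H := lt_of_le_not_ge hRH fun h => (Nat.one_lt_pow two_ne_zero
    hprime.one_lt).ne ((Subgroup.relIndex_eq_one.2 h).symm.trans hRp)
  obtain ⟨K, hRK, hKH, hK, hKp⟩ := exists_central_relIndex_eq_prime hRindex hlt
  have : K.Normal := Subgroup.commutator_top_left_le_iff.1 (hK.trans hRK)
  have hHp : K.relIndex H = p := Nat.eq_of_mul_eq_mul_left hprime.pos <| by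
    rw [← sq, ← hRp, ← hKp, Subgroup.relIndex_mul_relIndex R K H hRK hKH]
  have hKindex : K.index = p ^ (m + 1) := by
    rw [← Subgroup.relIndex_mul_index hKH, hHp, hHindex, pow_succ']
  have hH : ⁅(⊤ : Subgroup F), H⁆ ≤ K := commutator_le_of_relIndex_eq_prime hKindex hKH hHp
  obtain ⟨y₁, y₂, x, ht⟩ := exists_commutatorElement_notMem hR
  set c := ⁅y₁, y₂⁆
  have hc : c ∈ commutator F := commutatorElement_mem_commutator y₁ y₂
  have hcK : c ∉ K := fun h => ht (le_upperCentralSeriesStep_iff.2 hK h x)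
  have htK : ⁅c, x⁆ ∈ K := le_upperCentralSeriesStep_iff.2 hH (hF hc) x
  have hFF : ⁅commutator F, commutator F⁆ ≤ ⁅(⊤ : Subgroup F), R⁆ :=
    commutator_commutator_le_commutator_top hK hc
      (hF.trans (le_sup_zpowers_of_relIndex_eq_prime hHp hKH (hF hc) hcK))
  have hcomm : ∀ e : F, ⁅e, c⁆ ∈ K := fun e =>
    hH (Subgroup.commutator_mem_commutator (Subgroup.mem_top e) (hF hc))
  have hindex_t := index_centralizerMod_commutatorElement_dvd_relIndex hK hcomm hc hFF x
  have hindex_c := index_centralizerMod_commutatorElement_dvd_relIndex_sq hH hF y₁ y₂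
  rw [hKp] at hindex_t
  rw [hHp] at hindex_c
  rw [show p ^ (m.choose 2 + 3) = p * (p ^ 2 * p ^ m.choose 2) by ring]
  exact (relIndex_commutator_dvd_index_mul hRK hK hKp htK ht).trans (mul_dvd_mul hindex_t
    ((relIndex_commutator_dvd_index_mul hKH hH hHp (hF hc) hcK).trans
      (mul_dvd_mul hindex_c (relIndex_commutator_dvd_pow_choose_two hHindex))))

end NoncentralCommutator

section SchurMultiplier

theorem lift_id_surjective (G : Type*) [Group G] :
    Function.Surjective (FreeGroup.lift (id : G → G)) :=
  fun g => ⟨FreeGroup.of g, FreeGroup.lift_apply_of⟩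

instance normal_presentationKernel (G : Type*) [Group G] : (presentationKernel G).Normal :=
  MonoidHom.normal_ker _

theorem map_lift_id_commutator (G : Type*) [Group G] :
    (commutator (FreeGroup G)).map (FreeGroup.lift (id : G → G)) = commutator G := by
  rw [commutator_def, Subgroup.map_commutator,
    Subgroup.map_top_of_surjective _ (lift_id_surjective G), commutator_def]

theorem presentationKernel_relIndex {G : Type*} [Group G] (H : Subgroup (FreeGroup G)) :
    (presentationKernel G).relIndex H = Nat.card (H.map (FreeGroup.lift (id : G → G))) :=
  Subgroup.relIndex_ker _ _

theorem card_schurMultiplier_mul_card_commutator (G : Type*) [Group G] :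
    Nat.card (SchurMultiplier G) * Nat.card (commutator G) =
      ⁅(⊤ : Subgroup (FreeGroup G)), presentationKernel G⁆.relIndex
        (commutator (FreeGroup G)) := by
  have hM : Nat.card (SchurMultiplier G) = ⁅(⊤ : Subgroup (FreeGroup G)),
      presentationKernel G⁆.relIndex (presentationKernel G ⊓ commutator (FreeGroup G)) := rfl
  rw [hM, ← map_lift_id_commutator G, ← presentationKernel_relIndex,
    ← Subgroup.inf_relIndex_right (presentationKernel G)]
  exact Subgroup.relIndex_mul_relIndex _ _ _
    (le_inf (Subgroup.commutator_le_right _ _) (Subgroup.commutator_mono le_rfl le_top))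
    inf_le_right

theorem commutator_commutator_le_presentationKernel_iff {G : Type*} [Group G] :
    ⁅(⊤ : Subgroup (FreeGroup G)), commutator (FreeGroup G)⁆ ≤ presentationKernel G ↔
      commutator G ≤ Subgroup.center G := by
  rw [presentationKernel, ← Subgroup.map_eq_bot_iff, Subgroup.map_commutator,
    Subgroup.map_top_of_surjective _ (lift_id_surjective G), map_lift_id_commutator,
    Subgroup.commutator_top_left_eq_bot_iff_le_center]

theorem card_schurMultiplier_dvd {p m : ℕ} [Fact p.Prime] {G : Type*} [Group G]
    (hG : Nat.card G = p ^ (m + 2)) (hG' : Nat.card (commutator G) = p ^ 2)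
    (hnc : ¬ commutator G ≤ Subgroup.center G) :
    Nat.card (SchurMultiplier G) ∣ p ^ (m.choose 2 + 1) := by
  have hpos : 0 < p ^ 2 := pow_pos (Fact.out : p.Prime).pos 2
  have hindex : ((commutator G).comap (FreeGroup.lift id)).index = p ^ m := by
    rw [Subgroup.index_comap_of_surjective _ (lift_id_surjective G)]
    refine Nat.eq_of_mul_eq_mul_left hpos ?_
    rw [← hG', Subgroup.card_mul_index, hG, hG', pow_add, mul_comm]
  have hrelIndex : (presentationKernel G).relIndex ((commutator G).comap (FreeGroup.lift id)) =
      p ^ 2 := by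
    rw [presentationKernel_relIndex,
      Subgroup.map_comap_eq_self_of_surjective (lift_id_surjective G), hG']
  have hdvd := relIndex_commutator_dvd_of_not_commutator_commutator_le
    (R := presentationKernel G) (Subgroup.ker_le_comap _ _) hrelIndex hindex
    (Subgroup.map_le_iff_le_comap.1 (map_lift_id_commutator G).le)
    (commutator_commutator_le_presentationKernel_iff.not.2 hnc)
  rw [← card_schurMultiplier_mul_card_commutator, hG',
    show m.choose 2 + 3 = m.choose 2 + 1 + 2 from rfl, pow_add p (m.choose 2 + 1)] at hdvd
  exact Nat.dvd_of_mul_dvd_mul_right hpos hdvd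

end SchurMultiplier

/-- **Lemma 7.** There is no `p`-group of order `p^n` (`n ≥ 5`) with `s(G) = 2`,
`|G'| = p²` and `G'` not contained in the center of `G`. -/
theorem no_s_eq_two_of_commutator_not_central {p n : ℕ} (hp : p.Prime)
    {G : Type*} [Group G] (hG : Nat.card G = p ^ n) (hn : 5 ≤ n)
    (hG' : Nat.card (commutator G) = p ^ 2)
    (hnc : ¬ commutator G ≤ Subgroup.center G) :
    Nat.card (SchurMultiplier G) ≠ p ^ ((n - 1) * (n - 2) / 2 - 1) := by
  intro hM
  have : Fact p.Prime := ⟨hp⟩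
  obtain ⟨m, rfl⟩ := Nat.exists_eq_add_of_le' hn
  have hdvd := card_schurMultiplier_dvd (m := m + 3) hG hG' hnc
  rw [hM, show (m + 5 - 1) * (m + 5 - 2) / 2 = (m + 4).choose 2 from
    (Nat.choose_two_right (m + 4)).symm] at hdvd
  have hle := (Nat.pow_dvd_pow_iff_le_right hp.one_lt).1 hdvd
  have hchoose : (m + 4).choose 2 = (m + 3) + (m + 3).choose 2 := by
    rw [Nat.choose_succ_succ', Nat.choose_one_right]
  omega
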